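/- arXiv:2002.04756 — 2 statements merged into one kernel-verified Lean document; each statement's English description precedes it below -/
import Mathlib

section
/- Let μ be a nonnegative measure on ℝ with finite moments up to order 2t + 2, and let P be a real polynomial with deg P ≤ t and P(0) = 1 such that ∫ Q(λ) P(λ) λ dμ(λ) = 0 for every real polynomial Q with deg Q ≤ t − 1. Then for every real polynomial S with deg S ≤ t and S(0) = 1 one has ∫ S² dμ ≥ ∫ P² dμ; that is, P minimizes ∫ S² dμ over all residual polynomials S of degree at most t. -/
open Polynomial MeasureTheory

/-!
Two residual polynomials `P` and `S` agree at `0`, so `S - P = λ Q` with `deg Q < t`. Orthogonality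
of `P` to `Q` for `λ dμ` therefore says that `P` and `S - P` are orthogonal in `L²(μ)`, and the
Pythagorean identity `‖S‖² = ‖P‖² + ‖S - P‖²` gives the inequality. The same argument works with
any node `a` in place of `0`.
-/

section Pythagoras

variable {α : Type*} [MeasurableSpace α] {μ : Measure α} {f g : α → ℝ}

lemma integral_sq_eq_add_integral_sub_sq (hf : MemLp f 2 μ) (hg : MemLp g 2 μ)
    (horth : ∫ x, (g x - f x) * f x ∂μ = 0) :
    ∫ x, g x ^ 2 ∂μ = ∫ x, f x ^ 2 ∂μ + ∫ x, (g x - f x) ^ 2 ∂μ := by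
  have hsub : MemLp (fun x => g x - f x) 2 μ := hg.sub hf
  have hcross : Integrable (fun x => 2 * ((g x - f x) * f x)) μ :=
    (hsub.integrable_mul hf).const_mul 2
  calc ∫ x, g x ^ 2 ∂μ
      = ∫ x, f x ^ 2 + (g x - f x) ^ 2 + 2 * ((g x - f x) * f x) ∂μ := by
        congr with x; ring
    _ = ∫ x, f x ^ 2 ∂μ + ∫ x, (g x - f x) ^ 2 ∂μ + 2 * ∫ x, (g x - f x) * f x ∂μ := by
        rw [integral_add (hf.integrable_sq.fun_add hsub.integrable_sq) hcross,
          integral_add hf.integrable_sq hsub.integrable_sq, integral_const_mul]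
    _ = ∫ x, f x ^ 2 ∂μ + ∫ x, (g x - f x) ^ 2 ∂μ := by rw [horth, mul_zero, add_zero]

lemma integral_sq_le_integral_sq_of_integral_sub_mul_eq_zero (hf : MemLp f 2 μ)
    (hg : MemLp g 2 μ) (horth : ∫ x, (g x - f x) * f x ∂μ = 0) :
    ∫ x, f x ^ 2 ∂μ ≤ ∫ x, g x ^ 2 ∂μ := by
  rw [integral_sq_eq_add_integral_sub_sq hf hg horth]
  exact le_add_of_nonneg_right (integral_nonneg fun x => sq_nonneg (g x - f x))

end Pythagoras

lemma integrable_eval_of_forall_integrable_pow {α R : Type*} [MeasurableSpace α] [NormedRing R]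
    {μ : Measure α} {f : α → R} {n : ℕ} (hmom : ∀ k ≤ n, Integrable (fun x => f x ^ k) μ)
    {p : R[X]} (hp : p.natDegree ≤ n) : Integrable (fun x => p.eval (f x)) μ := by
  simp only [eval_eq_sum_range]
  refine integrable_finsetSum _ fun k hk => (hmom k ?_).const_mul (p.coeff k)
  exact (Finset.mem_range_succ_iff.mp hk).trans hp

lemma memLp_two_eval_of_forall_integrable_pow {μ : Measure ℝ} {n : ℕ}
    (hmom : ∀ k ≤ 2 * n, Integrable (fun x => x ^ k) μ) {p : ℝ[X]} (hp : p.natDegree ≤ n) :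
    MemLp (fun x => p.eval x) 2 μ := by
  rw [memLp_two_iff_integrable_sq p.continuous.aestronglyMeasurable]
  simpa only [eval_pow] using
    integrable_eval_of_forall_integrable_pow hmom (natDegree_pow_le_of_le 2 hp)

lemma exists_degree_lt_X_sub_C_mul_eq_of_isRoot {R : Type*} [CommRing R] [Nontrivial R]
    {p : R[X]} {a : R} {n : ℕ} (hp : p.natDegree ≤ n) (ha : p.IsRoot a) :
    ∃ q : R[X], q.degree < n ∧ (X - C a) * q = p := by
  refine ⟨p /ₘ (X - C a), ?_, mul_divByMonic_eq_iff_isRoot.mpr ha⟩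
  rcases eq_or_ne p 0 with rfl | hp0
  · simp
  · exact (degree_divByMonic_lt p (X - C a) hp0 (by simp)).trans_le
      (degree_le_of_natDegree_le hp)

theorem residual_orthogonal_minimizes_sq_integral_general {μ : Measure ℝ} {t : ℕ} {a : ℝ}
    (hmom : ∀ k ≤ 2 * t, Integrable (fun x => x ^ k) μ) {P S : ℝ[X]}
    (hP : P.natDegree ≤ t) (hS : S.natDegree ≤ t) (hPS : S.eval a = P.eval a)
    (horth : ∀ Q : ℝ[X], Q.degree < t → ∫ x, Q.eval x * P.eval x * (x - a) ∂μ = 0) :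
    ∫ x, P.eval x ^ 2 ∂μ ≤ ∫ x, S.eval x ^ 2 ∂μ := by
  have hroot : (S - P).IsRoot a := by rw [IsRoot.def, eval_sub, hPS, sub_self]
  have hdeg : (S - P).natDegree ≤ t := (natDegree_sub_le S P).trans (max_le hS hP)
  obtain ⟨Q, hQ, hfactor⟩ := exists_degree_lt_X_sub_C_mul_eq_of_isRoot hdeg hroot
  have hsub (x : ℝ) : S.eval x - P.eval x = (x - a) * Q.eval x := by
    rw [← eval_sub, ← hfactor, eval_mul, eval_sub, eval_X, eval_C]
  refine integral_sq_le_integral_sq_of_integral_sub_mul_eq_zero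
    (memLp_two_eval_of_forall_integrable_pow hmom hP)
    (memLp_two_eval_of_forall_integrable_pow hmom hS) ?_
  calc ∫ x, (S.eval x - P.eval x) * P.eval x ∂μ
      = ∫ x, Q.eval x * P.eval x * (x - a) ∂μ := by
        congr with x; rw [hsub]; ring
    _ = 0 := horth Q hQ

/-- Let `μ` be a nonnegative measure on `ℝ` with finite moments up to order
`2t + 2`, and let `P` be a residual polynomial of degree at most `t`
(`P(0) = 1`) orthogonal, w.r.t. the weight `λ dμ(λ)`, to all polynomials of
degree `< t`. Then `P` minimizes `∫ S² dμ` over all residual polynomials `S`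
of degree at most `t`: for any such `S`, `∫ S² dμ ≥ ∫ P² dμ`. -/
theorem residual_orthogonal_minimizes_sq_integral
    (μ : Measure ℝ) (t : ℕ)
    (hmom : ∀ k ≤ 2 * t + 2, Integrable (fun x => x ^ k) μ)
    (P : Polynomial ℝ) (hdeg : P.natDegree ≤ t) (hres : P.eval 0 = 1)
    (horth : ∀ Q : Polynomial ℝ, Q.degree < t →
      (∫ x, Q.eval x * P.eval x * x ∂μ) = 0) :
    ∀ S : Polynomial ℝ, S.natDegree ≤ t → S.eval 0 = 1 →
      (∫ x, (P.eval x) ^ 2 ∂μ) ≤ ∫ x, (S.eval x) ^ 2 ∂μ := fun _ hS hS0 =>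
  residual_orthogonal_minimizes_sq_integral_general (a := 0) (fun k hk => hmom k (by lia)) hdeg hS
    (hS0.trans hres.symm) (by simpa only [sub_zero] using horth)
end

section
/- Let r > 0 and σ > 0, and set ℓ = σ²(1 − √r)² and L = σ²(1 + √r)². Then ∫_ℓ^L √((L − λ)(λ − ℓ))/(2πσ²λ) dλ = min(r, 1). Consequently, the Marchenko–Pastur measure, defined as the point mass of weight max(1 − r, 0) at 0 plus the density √((L − λ)(λ − ℓ))/(2πσ²λ) on [ℓ, L], is a probability measure. -/
open MeasureTheory

/-- The Marchenko–Pastur measure with ratio `r > 0` and scale `σ > 0`: a point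
mass of weight `max (1 − r) 0` at `0` plus the density
`√((L − λ)(λ − ℓ))/(2πσ²λ)` on `[ℓ, L]`, where `ℓ = σ²(1 − √r)²` and
`L = σ²(1 + √r)²`. -/
noncomputable def mpMeasure (r σ : ℝ) : Measure ℝ :=
  (ENNReal.ofReal (max (1 - r) 0)) • Measure.dirac 0 +
    (volume.restrict
        (Set.Icc (σ ^ 2 * (1 - Real.sqrt r) ^ 2) (σ ^ 2 * (1 + Real.sqrt r) ^ 2))).withDensity
      (fun x => ENNReal.ofReal
        (Real.sqrt ((σ ^ 2 * (1 + Real.sqrt r) ^ 2 - x) * (x - σ ^ 2 * (1 - Real.sqrt r) ^ 2))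
          / (2 * Real.pi * σ ^ 2 * x)))

/-!
Put `A x = arcsin ((2 * x - a - b) / (b - a))`, a primitive of `1 / √((b - x) * (x - a))` on
`(a, b)`. The involution `x ↦ a * b / x` swaps `a` and `b`, and the chain rule shows that
`√(a * b) * A (a * b / x)` has derivative `-(a * b / (x * √((b - x) * (x - a))))`. Since
`(b - x) * (x - a) = (a + b) * x - x ^ 2 - a * b`, the function
`√((b - x) * (x - a)) + (a + b) / 2 * A x + √(a * b) * A (a * b / x)` is a primitive of
`√((b - x) * (x - a)) / x`, whence
`∫ x in a..b, √((b - x) * (x - a)) / x = π * ((a + b) / 2 - √(a * b))`.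
At the Marchenko–Pastur edges the mean is `σ ^ 2 * (1 + r)` and the geometric mean is
`σ ^ 2 * |1 - r|`, which gives total mass `(1 + r - |1 - r|) / 2 = min r 1`.
-/

section ArcsinIcc

open Real Set

variable {a b x : ℝ}

/-- The increasing map of `[a, b]` onto `[-π / 2, π / 2]` obtained by rescaling `[a, b]` affinely to
`[-1, 1]` and applying `arcsin`; on `(a, b)` it is a primitive of `1 / √((b - x) * (x - a))`. -/
noncomputable def arcsinIcc (a b x : ℝ) : ℝ :=
  arcsin ((2 * x - a - b) / (b - a))

lemma arcsinIcc_left (hab : a < b) : arcsinIcc a b a = -(π / 2) := by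
  have hab' : b - a ≠ 0 := (sub_pos.2 hab).ne'
  have h : (2 * a - a - b) / (b - a) = -1 := by field_simp; ring
  rw [arcsinIcc, h, arcsin_neg_one]

lemma arcsinIcc_right (hab : a < b) : arcsinIcc a b b = π / 2 := by
  have hab' : b - a ≠ 0 := (sub_pos.2 hab).ne'
  have h : (2 * b - a - b) / (b - a) = 1 := by field_simp; ring
  rw [arcsinIcc, h, arcsin_one]

lemma continuous_arcsinIcc (a b : ℝ) : Continuous (arcsinIcc a b) := by
  unfold arcsinIcc
  fun_prop

lemma mul_sub_sub_pos_of_mem_Ioo (hx : x ∈ Ioo a b) : 0 < (b - x) * (x - a) :=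
  mul_pos (sub_pos.2 hx.2) (sub_pos.2 hx.1)

lemma hasDerivAt_arcsinIcc (hx : x ∈ Ioo a b) :
    HasDerivAt (arcsinIcc a b) (1 / √((b - x) * (x - a))) x := by
  have hab : 0 < b - a := sub_pos.2 (hx.1.trans hx.2)
  have hpos := mul_sub_sub_pos_of_mem_Ioo hx
  set u := (2 * x - a - b) / (b - a) with hu
  have one_sub_sq : 1 - u ^ 2 = (2 / (b - a)) ^ 2 * ((b - x) * (x - a)) := by
    rw [hu]
    field_simp
    ring
  have sq_lt_one : u ^ 2 < 1 := by
    rw [← sub_pos, one_sub_sq]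
    positivity
  obtain ⟨neg_one_lt, lt_one⟩ := abs_lt.1 ((sq_lt_one_iff_abs_lt_one u).1 sq_lt_one)
  have rescale : HasDerivAt (fun y : ℝ ↦ (2 * y - a - b) / (b - a)) (2 / (b - a)) x := by
    simpa using ((((hasDerivAt_id x).const_mul 2).sub_const a).sub_const b).div_const (b - a)
  refine ((hasDerivAt_arcsin neg_one_lt.ne' lt_one.ne).comp x rescale).congr_deriv ?_
  rw [one_sub_sq, sqrt_mul (sq_nonneg _), sqrt_sq (by positivity)]
  field_simp

lemma mul_div_mem_Ioo (ha : 0 < a) (hx : x ∈ Ioo a b) : a * b / x ∈ Ioo a b := by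
  have hx₀ : 0 < x := ha.trans hx.1
  rw [mem_Ioo, lt_div_iff₀ hx₀, div_lt_iff₀ hx₀, mul_comm a b]
  exact ⟨by nlinarith [hx.2], by nlinarith [hx.1, hx.2]⟩

lemma hasDerivAt_sqrt_mul_arcsinIcc_mul_div (ha : 0 ≤ a) (hx : x ∈ Ioo a b) :
    HasDerivAt (fun y ↦ √(a * b) * arcsinIcc a b (a * b / y))
      (-(a * b / (x * √((b - x) * (x - a))))) x := by
  rcases ha.eq_or_lt with rfl | ha
  · simpa using hasDerivAt_const x (0 : ℝ)
  have hx₀ : 0 < x := ha.trans hx.1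
  have hab : 0 < a * b := mul_pos ha (hx₀.trans hx.2)
  have hpos := mul_sub_sub_pos_of_mem_Ioo hx
  have inversion : HasDerivAt (fun y ↦ a * b / y) (-(a * b / x ^ 2)) x := by
    simpa [div_eq_mul_inv] using (hasDerivAt_inv hx₀.ne').const_mul (a * b)
  have sqrt_inversion : √((b - a * b / x) * (a * b / x - a)) =
      √(a * b) * √((b - x) * (x - a)) / x := by
    have h : (b - a * b / x) * (a * b / x - a) = a * b * ((b - x) * (x - a)) / x ^ 2 := by
      field_simp
    rw [h, sqrt_div (by positivity), sqrt_mul hab.le, sqrt_sq hx₀.le]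
  refine (((hasDerivAt_arcsinIcc (mul_div_mem_Ioo ha hx)).comp x inversion).const_mul
    √(a * b)).congr_deriv ?_
  rw [sqrt_inversion]
  field_simp

lemma continuousOn_sqrt_mul_arcsinIcc_mul_div (ha : 0 ≤ a) :
    ContinuousOn (fun x ↦ √(a * b) * arcsinIcc a b (a * b / x)) (Icc a b) := by
  rcases ha.eq_or_lt with rfl | ha
  · simpa using continuousOn_const
  · exact continuousOn_const.mul <| (continuous_arcsinIcc a b).comp_continuousOn <|
      continuousOn_const.div continuousOn_id fun x hx ↦ (ha.trans_le hx.1).ne'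

end ArcsinIcc

section SqrtDivIntegral

open Real Set

variable {a b x : ℝ}

lemma hasDerivAt_sqrt_mul_sub_sub (hx : x ∈ Ioo a b) :
    HasDerivAt (fun y ↦ √((b - y) * (y - a)))
      ((a + b - 2 * x) / (2 * √((b - x) * (x - a)))) x := by
  refine HasDerivAt.sqrt ?_ (mul_sub_sub_pos_of_mem_Ioo hx).ne'
  refine (((hasDerivAt_id x).const_sub b).mul ((hasDerivAt_id x).sub_const a)).congr_deriv ?_
  simp only [id_eq]
  ring

/-- A primitive of `√((b - x) * (x - a)) / x` on `(a, b)`, for `0 ≤ a`. If `a = 0` the last summand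
vanishes. -/
noncomputable def sqrtDivPrimitive (a b x : ℝ) : ℝ :=
  √((b - x) * (x - a)) + (a + b) / 2 * arcsinIcc a b x + √(a * b) * arcsinIcc a b (a * b / x)

lemma hasDerivAt_sqrtDivPrimitive (ha : 0 ≤ a) (hx : x ∈ Ioo a b) :
    HasDerivAt (sqrtDivPrimitive a b) (√((b - x) * (x - a)) / x) x := by
  have hx₀ : 0 < x := ha.trans_lt hx.1
  have hpos := mul_sub_sub_pos_of_mem_Ioo hx
  refine (((hasDerivAt_sqrt_mul_sub_sub hx).add
    ((hasDerivAt_arcsinIcc hx).const_mul ((a + b) / 2))).add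
    (hasDerivAt_sqrt_mul_arcsinIcc_mul_div ha hx)).congr_deriv ?_
  field_simp
  rw [sq_sqrt hpos.le]
  ring

lemma continuousOn_sqrtDivPrimitive (ha : 0 ≤ a) :
    ContinuousOn (sqrtDivPrimitive a b) (Icc a b) := by
  have hA := continuous_arcsinIcc a b
  exact ContinuousOn.add (by fun_prop) (continuousOn_sqrt_mul_arcsinIcc_mul_div ha)

lemma sqrtDivPrimitive_right_sub_left (ha : 0 ≤ a) (hab : a < b) :
    sqrtDivPrimitive a b b - sqrtDivPrimitive a b a = π * ((a + b) / 2 - √(a * b)) := by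
  have hb : b ≠ 0 := (ha.trans_lt hab).ne'
  have hA : √(a * b) * arcsinIcc a b (a * b / a) = √(a * b) * (π / 2) := by
    rcases ha.eq_or_lt with rfl | ha
    · simp
    · rw [mul_div_cancel_left₀ b ha.ne', arcsinIcc_right hab]
  simp only [sqrtDivPrimitive, hA, mul_div_cancel_right₀ a hb, arcsinIcc_left hab,
    arcsinIcc_right hab, sub_self, zero_mul, mul_zero, sqrt_zero]
  ring

lemma intervalIntegrable_sqrt_mul_sub_sub_div (ha : 0 ≤ a) (hab : a ≤ b) :
    IntervalIntegrable (fun x ↦ √((b - x) * (x - a)) / x) volume a b := by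
  rw [intervalIntegrable_iff_integrableOn_Ioc_of_le hab]
  exact intervalIntegral.integrableOn_deriv_of_nonneg (continuousOn_sqrtDivPrimitive ha)
    (fun _ hx ↦ hasDerivAt_sqrtDivPrimitive ha hx)
    fun _ hx ↦ div_nonneg (sqrt_nonneg _) (ha.trans hx.1.le)

lemma integral_sqrt_mul_sub_sub_div (ha : 0 ≤ a) (hab : a ≤ b) :
    ∫ x in a..b, √((b - x) * (x - a)) / x = π * ((a + b) / 2 - √(a * b)) := by
  rcases hab.eq_or_lt with rfl | hab
  · simp [sqrt_mul_self ha]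
  rw [intervalIntegral.integral_eq_sub_of_hasDerivAt_of_le hab.le
    (continuousOn_sqrtDivPrimitive ha) (fun _ hx ↦ hasDerivAt_sqrtDivPrimitive ha hx)
    (intervalIntegrable_sqrt_mul_sub_sub_div ha hab.le), sqrtDivPrimitive_right_sub_left ha hab]

end SqrtDivIntegral

lemma withDensity_ofReal_restrict_Icc_univ {μ : Measure ℝ} [NullSingletonClass μ]
    {f : ℝ → ℝ} {a b : ℝ} (hab : a ≤ b) (hf : IntervalIntegrable f μ a b)
    (hf₀ : ∀ x ∈ Set.Icc a b, 0 ≤ f x) :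
    (μ.restrict (Set.Icc a b)).withDensity (fun x ↦ ENNReal.ofReal (f x)) Set.univ =
      ENNReal.ofReal (∫ x in a..b, f x ∂μ) := by
  have hf_int : IntegrableOn f (Set.Icc a b) μ :=
    (intervalIntegrable_iff_integrableOn_Icc_of_le hab).1 hf
  have hf_nonneg : 0 ≤ᵐ[μ.restrict (Set.Icc a b)] f :=
    (ae_restrict_mem measurableSet_Icc).mono hf₀
  rw [withDensity_apply _ MeasurableSet.univ, Measure.restrict_univ,
    ← ofReal_integral_eq_lintegral_ofReal hf_int hf_nonneg, integral_Icc_eq_integral_Ioc,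
    intervalIntegral.integral_of_le hab]

section MarchenkoPastur

open Real Set

variable {r σ : ℝ}

/-- The left edge `ℓ` of the support of the absolutely continuous part of `mpMeasure r σ`. -/
noncomputable def mpLeft (r σ : ℝ) : ℝ := σ ^ 2 * (1 - √r) ^ 2

/-- The right edge `L` of the support of the absolutely continuous part of `mpMeasure r σ`. -/
noncomputable def mpRight (r σ : ℝ) : ℝ := σ ^ 2 * (1 + √r) ^ 2

/-- The Marchenko–Pastur density; it is meant to be used on `[mpLeft r σ, mpRight r σ]` only. When
`r = 1` this interval contains `0`, where the value is the junk `0`. -/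
noncomputable def mpDensity (r σ x : ℝ) : ℝ :=
  √((mpRight r σ - x) * (x - mpLeft r σ)) / (2 * π * σ ^ 2 * x)

lemma mpLeft_nonneg (r σ : ℝ) : 0 ≤ mpLeft r σ := by
  unfold mpLeft
  positivity

lemma mpLeft_le_mpRight (r σ : ℝ) : mpLeft r σ ≤ mpRight r σ := by
  unfold mpLeft mpRight
  gcongr ?_ * ?_
  nlinarith [sqrt_nonneg r]

lemma mpLeft_add_mpRight_div_two (hr : 0 ≤ r) (σ : ℝ) :
    (mpLeft r σ + mpRight r σ) / 2 = σ ^ 2 * (1 + r) :=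
  calc (mpLeft r σ + mpRight r σ) / 2 = σ ^ 2 * (1 + √r ^ 2) := by unfold mpLeft mpRight; ring
    _ = σ ^ 2 * (1 + r) := by rw [sq_sqrt hr]

lemma sqrt_mpLeft_mul_mpRight (hr : 0 ≤ r) (σ : ℝ) :
    √(mpLeft r σ * mpRight r σ) = σ ^ 2 * |1 - r| :=
  calc √(mpLeft r σ * mpRight r σ) = √((σ ^ 2 * (1 - √r ^ 2)) ^ 2) := by
        unfold mpLeft mpRight; ring_nf
    _ = σ ^ 2 * |1 - r| := by rw [sq_sqrt hr, sqrt_sq_eq_abs, abs_mul, abs_of_nonneg (sq_nonneg σ)]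

lemma mpDensity_nonneg {x : ℝ} (hx : 0 ≤ x) : 0 ≤ mpDensity r σ x := by
  unfold mpDensity
  positivity

lemma mpDensity_eq_inv_mul (r σ x : ℝ) :
    mpDensity r σ x =
      (2 * π * σ ^ 2)⁻¹ * (√((mpRight r σ - x) * (x - mpLeft r σ)) / x) := by
  rw [mpDensity, div_mul_eq_div_div_swap, div_eq_inv_mul]

lemma intervalIntegrable_mpDensity (r σ : ℝ) :
    IntervalIntegrable (mpDensity r σ) volume (mpLeft r σ) (mpRight r σ) := by
  rw [funext (mpDensity_eq_inv_mul r σ)]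
  exact (intervalIntegrable_sqrt_mul_sub_sub_div (mpLeft_nonneg r σ)
    (mpLeft_le_mpRight r σ)).const_mul _

lemma integral_mpDensity (hr : 0 ≤ r) (hσ : σ ≠ 0) :
    ∫ x in mpLeft r σ..mpRight r σ, mpDensity r σ x = min r 1 :=
  calc ∫ x in mpLeft r σ..mpRight r σ, mpDensity r σ x
      = (2 * π * σ ^ 2)⁻¹ * (π * (σ ^ 2 * (1 + r) - σ ^ 2 * |1 - r|)) := by
        simp only [mpDensity_eq_inv_mul, intervalIntegral.integral_const_mul]
        rw [integral_sqrt_mul_sub_sub_div (mpLeft_nonneg r σ) (mpLeft_le_mpRight r σ),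
          mpLeft_add_mpRight_div_two hr, sqrt_mpLeft_mul_mpRight hr]
    _ = (r + 1 - |1 - r|) / 2 := by field_simp; ring
    _ = min r 1 := by
        rw [inf_eq_half_smul_add_sub_abs_sub' ℝ, smul_eq_mul, div_eq_inv_mul]

lemma isProbabilityMeasure_mpMeasure (hr : 0 ≤ r) (hσ : σ ≠ 0) :
    IsProbabilityMeasure (mpMeasure r σ) where
  measure_univ :=
    calc mpMeasure r σ univ
        = ENNReal.ofReal (max (1 - r) 0) +
            (volume.restrict (Icc (mpLeft r σ) (mpRight r σ))).withDensity
              (fun x ↦ ENNReal.ofReal (mpDensity r σ x)) univ := by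
          simp [mpMeasure, mpLeft, mpRight, mpDensity]
      _ = ENNReal.ofReal (max (1 - r) 0) + ENNReal.ofReal (min r 1) := by
          rw [withDensity_ofReal_restrict_Icc_univ (mpLeft_le_mpRight r σ)
            (intervalIntegrable_mpDensity r σ)
            fun x hx ↦ mpDensity_nonneg ((mpLeft_nonneg r σ).trans hx.1),
            integral_mpDensity hr hσ]
      _ = ENNReal.ofReal (max (1 - r) 0 + min r 1) :=
          (ENNReal.ofReal_add (le_max_right _ _) (le_min hr zero_le_one)).symm
      _ = 1 := by
          have h : max (1 - r) 0 + min r 1 = 1 := by grind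
          rw [h, ENNReal.ofReal_one]

end MarchenkoPastur

/-- The Marchenko–Pastur density integrates to `min r 1` on `[ℓ, L]`, so that
the Marchenko–Pastur measure (adding the point mass `max (1 − r) 0` at `0`) is
a probability measure. -/
theorem mpMeasure_isProbabilityMeasure (r σ : ℝ) (hr : 0 < r) (hσ : 0 < σ)
    (ℓ L : ℝ) (hℓ : ℓ = σ ^ 2 * (1 - Real.sqrt r) ^ 2)
    (hL : L = σ ^ 2 * (1 + Real.sqrt r) ^ 2) :
    (∫ x in ℓ..L, Real.sqrt ((L - x) * (x - ℓ)) / (2 * Real.pi * σ ^ 2 * x)) = min r 1 ∧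
    IsProbabilityMeasure (mpMeasure r σ) := by
  subst hℓ hL
  exact ⟨integral_mpDensity hr.le hσ.ne', isProbabilityMeasure_mpMeasure hr.le hσ.ne'⟩
end
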